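/- For a nonzero matrix A, the function v ↦ 1/γ(v) − 1/v, where γ(v) = (1/N)·tr[(s·AᴴA + v⁻¹·I)⁻¹], is strictly positive and nonincreasing in v on (0,∞). -/

import Mathlib

open Matrix

/-- The LMMSE transfer function γ(v) = (1/N)·tr[(s·AᴴA + v⁻¹·I)⁻¹]. -/
noncomputable def lmmseGamma' {M N : ℕ} (A : Matrix (Fin M) (Fin N) ℂ) (s : ℝ) (v : ℝ) : ℝ :=
  (((((s : ℂ) • (Aᴴ * A) + ((v⁻¹ : ℝ) : ℂ) • (1 : Matrix (Fin N) (Fin N) ℂ))⁻¹).trace).re) / N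

theorem Matrix.IsHermitian.trace_inv_smul_add_smul_one {n : Type*} [Fintype n] [DecidableEq n]
    {B : Matrix n n ℂ} (hB : B.IsHermitian) (s x : ℝ) (hx : ∀ i, s * hB.eigenvalues i + x ≠ 0) :
    (((s : ℂ) • B + (x : ℂ) • (1 : Matrix n n ℂ))⁻¹).trace =
      ((∑ i, (s * hB.eigenvalues i + x)⁻¹ : ℝ) : ℂ) := by
  set φ := Unitary.conjStarAlgAut ℂ (Matrix n n ℂ) hB.eigenvectorUnitary with hφ
  have hinv : ((s : ℂ) • B + (x : ℂ) • (1 : Matrix n n ℂ))⁻¹ =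
      φ (diagonal fun i => (((s * hB.eigenvalues i + x)⁻¹ : ℝ) : ℂ)) := by
    apply inv_eq_right_inv
    have hsum : (s : ℂ) • B + (x : ℂ) • (1 : Matrix n n ℂ) =
        φ (diagonal fun i => ((s * hB.eigenvalues i + x : ℝ) : ℂ)) := by
      conv_lhs => rw [hB.spectral_theorem, ← hφ, ← map_one φ, ← map_smul, ← map_smul, ← map_add]
      congr 1
      ext i j
      by_cases h : i = j <;> simp [h]
    rw [hsum, ← map_mul, diagonal_mul_diagonal, ← map_one φ]
    congr 1
    rw [← diagonal_one]
    congr 1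
    ext i
    rw [← Complex.ofReal_mul, mul_inv_cancel₀ (hx i), Complex.ofReal_one]
  rw [hinv, hφ, Unitary.conjStarAlgAut_apply, trace_mul_cycle, Unitary.coe_star_mul_self,
    one_mul, trace_diagonal, Complex.ofReal_sum]

theorem card_mul_inv_sum_inv_add_sub_mono {ι : Type*} [Fintype ι] [Nonempty ι] {a : ι → ℝ}
    (ha : ∀ i, 0 ≤ a i) {x y : ℝ} (hx : 0 < x) (hxy : x ≤ y) :
    Fintype.card ι / ∑ i, (a i + x)⁻¹ - x ≤ Fintype.card ι / ∑ i, (a i + y)⁻¹ - y := by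
  have hy : 0 < y := hx.trans_le hxy
  have hax : ∀ i, 0 < a i + x := fun i => add_pos_of_nonneg_of_pos (ha i) hx
  have hay : ∀ i, 0 < a i + y := fun i => add_pos_of_nonneg_of_pos (ha i) hy
  have hP : 0 < ∑ i, (a i + x)⁻¹ :=
    Finset.sum_pos (fun i _ => inv_pos.2 (hax i)) Finset.univ_nonempty
  have hQ : 0 < ∑ i, (a i + y)⁻¹ :=
    Finset.sum_pos (fun i _ => inv_pos.2 (hay i)) Finset.univ_nonempty
  have hmono : Monovary (fun i => (a i + x)⁻¹) (fun i => (a i + y)⁻¹) := by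
    intro i j hij
    have := (inv_lt_inv₀ (hay i) (hay j)).1 hij
    exact (inv_le_inv₀ (hax i) (hax j)).2 (by linarith)
  have hcheb := hmono.sum_mul_sum_le_card_mul_sum
  have hdiff : ∑ i, (a i + x)⁻¹ - ∑ i, (a i + y)⁻¹ =
      (y - x) * ∑ i, (a i + x)⁻¹ * (a i + y)⁻¹ := by
    rw [← Finset.sum_sub_distrib, Finset.mul_sum]
    refine Finset.sum_congr rfl fun i _ => ?_
    have := (hax i).ne'
    have := (hay i).ne'
    field_simp
    ring
  have hkey : y - x ≤ Fintype.card ι / ∑ i, (a i + y)⁻¹ - Fintype.card ι / ∑ i, (a i + x)⁻¹ := by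
    rw [div_sub_div _ _ hQ.ne' hP.ne', le_div_iff₀ (mul_pos hQ hP)]
    linear_combination (y - x) * hcheb - Fintype.card ι * hdiff
  linarith

theorem lt_card_mul_inv_sum_inv_add {ι : Type*} [Fintype ι] {a : ι → ℝ}
    (ha : ∀ i, 0 ≤ a i) (hpos : ∃ i, 0 < a i) {x : ℝ} (hx : 0 < x) :
    x < Fintype.card ι / ∑ i, (a i + x)⁻¹ := by
  obtain ⟨k, hk⟩ := hpos
  have hP : 0 < ∑ i, (a i + x)⁻¹ :=
    Finset.sum_pos (fun i _ => inv_pos.2 (add_pos_of_nonneg_of_pos (ha i) hx))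
      ⟨k, Finset.mem_univ k⟩
  have hlt : ∑ i, (a i + x)⁻¹ < ∑ _i : ι, x⁻¹ :=
    Finset.sum_lt_sum (fun i _ => inv_anti₀ hx (by linarith [ha i]))
      ⟨k, Finset.mem_univ k, inv_strictAnti₀ hx (by linarith)⟩
  rw [Finset.sum_const, Finset.card_univ, nsmul_eq_mul] at hlt
  rw [lt_div_iff₀ hP]
  calc x * ∑ i, (a i + x)⁻¹ < x * (Fintype.card ι * x⁻¹) := mul_lt_mul_of_pos_left hlt hx
    _ = Fintype.card ι := by field_simp

theorem one_div_lmmseGamma'_sub {M N : ℕ} (A : Matrix (Fin M) (Fin N) ℂ) {s v : ℝ}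
    (hs : 0 < s) (hv : 0 < v) :
    1 / lmmseGamma' A s v - 1 / v = Fintype.card (Fin N) /
      ∑ i, (s * (isHermitian_conjTranspose_mul_self A).eigenvalues i + v⁻¹)⁻¹ - v⁻¹ := by
  have hne : ∀ i, s * (isHermitian_conjTranspose_mul_self A).eigenvalues i + v⁻¹ ≠ 0 := fun i =>
    (add_pos_of_nonneg_of_pos
      (mul_nonneg hs.le (eigenvalues_conjTranspose_mul_self_nonneg A i)) (inv_pos.2 hv)).ne'
  rw [lmmseGamma', IsHermitian.trace_inv_smul_add_smul_one _ s v⁻¹ hne,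
    Complex.ofReal_re, one_div_div, one_div, Fintype.card_fin]

theorem stmt_6 {M N : ℕ} (hN : 0 < N) (A : Matrix (Fin M) (Fin N) ℂ)
    (hA : A ≠ 0) (s : ℝ) (hs : 0 < s) :
    (∀ v : ℝ, 0 < v → 0 < 1 / lmmseGamma' A s v - 1 / v) ∧
    (∀ v₁ v₂ : ℝ, 0 < v₁ → v₁ ≤ v₂ →
      1 / lmmseGamma' A s v₂ - 1 / v₂ ≤ 1 / lmmseGamma' A s v₁ - 1 / v₁) := by
  have : Nonempty (Fin N) := ⟨⟨0, hN⟩⟩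
  have hB := isHermitian_conjTranspose_mul_self A
  have hnonneg : ∀ i, 0 ≤ s * hB.eigenvalues i :=
    fun i => mul_nonneg hs.le (eigenvalues_conjTranspose_mul_self_nonneg A i)
  refine ⟨fun v hv => ?_, fun v₁ v₂ hv₁ h => ?_⟩
  · open scoped ComplexOrder in
    obtain ⟨i, hi⟩ := Function.ne_iff.1 fun h =>
      hA (conjTranspose_mul_self_eq_zero.1 (hB.eigenvalues_eq_zero_iff.1 h))
    rw [one_div_lmmseGamma'_sub A hs hv]
    exact sub_pos.2 (lt_card_mul_inv_sum_inv_add hnonneg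
      ⟨i, mul_pos hs ((eigenvalues_conjTranspose_mul_self_nonneg A i).lt_of_ne' hi)⟩ (inv_pos.2 hv))
  · have hv₂ := hv₁.trans_le h
    rw [one_div_lmmseGamma'_sub A hs hv₁, one_div_lmmseGamma'_sub A hs hv₂]
    exact card_mul_inv_sum_inv_add_sub_mono hnonneg (inv_pos.2 hv₂) (inv_anti₀ hv₁ h)
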